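/- For any θ ∈ (0, 1/2) and any μ with 0 < μ ≤ 9/50, for every w ∈ ℝ^{n−1} with μ/(4√2) ≤ ‖w‖ ≤ 1/(20√5), the gradient in w of the expected objective satisfies wᵀ ∇_w E[h_μ(q(w)ᵀ x)] / ‖w‖ ≥ θ/(20√(2π)), where x ∈ ℝ^n is a random vector with i.i.d. BG(θ) entries. -/

import Mathlib

open MeasureTheory ProbabilityTheory Real Matrix
open scoped RealInnerProductSpace ENNReal NNReal

noncomputable section

/-- The Bernoulli–Gaussian law `BG(θ)`: with probability `θ` a standard Gaussian,
with probability `1-θ` a point mass at `0`. -/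
def bg (θ : ℝ) : Measure ℝ :=
  θ.toNNReal • gaussianReal 0 1 + (1 - θ).toNNReal • Measure.dirac 0

instance bg.instIsFiniteMeasure (θ : ℝ) : IsFiniteMeasure (bg θ) := by
  unfold bg; infer_instance

/-- Law of an `n × p` matrix with i.i.d. `BG(θ)` entries. -/
def bgMatrix (θ : ℝ) (n p : ℕ) : Measure (Fin n → Fin p → ℝ) :=
  Measure.pi fun _ => Measure.pi fun _ => bg θ

/-- Law of a vector in `ℝ^n` with i.i.d. `BG(θ)` entries. -/
def bgVec (θ : ℝ) (n : ℕ) : Measure (Fin n → ℝ) :=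
  Measure.pi fun _ => bg θ

/-- The smooth sparsity surrogate `h_μ(z) = μ log cosh (z/μ)`. -/
def hmu (μ z : ℝ) : ℝ := μ * Real.log (Real.cosh (z / μ))

/-- Reparametrization `q(w) = (w, √(1-‖w‖²))` with `w` in the unit ball of `ℝ^{n-1}`. -/
def qmap (n : ℕ) (w : EuclideanSpace ℝ (Fin (n - 1))) : Fin n → ℝ :=
  fun i => if h : (i : ℕ) < n - 1 then w ⟨i, h⟩ else Real.sqrt (1 - ‖w‖ ^ 2)

/-- `f(q; Y) = (1/p) ∑ₖ h_μ(qᵀ yₖ)`. -/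
def ffun (n p : ℕ) (μ : ℝ) (Y : Matrix (Fin n) (Fin p) ℝ)
    (q : EuclideanSpace ℝ (Fin n)) : ℝ :=
  (p : ℝ)⁻¹ * ∑ k : Fin p, hmu μ (∑ i : Fin n, q i * Y i k)

/-- `g(w; Y) = f(q(w); Y)`. -/
def gfun (n p : ℕ) (μ : ℝ) (Y : Matrix (Fin n) (Fin p) ℝ)
    (w : EuclideanSpace ℝ (Fin (n - 1))) : ℝ :=
  (p : ℝ)⁻¹ * ∑ k : Fin p, hmu μ (∑ i : Fin n, qmap n w i * Y i k)

/-- Gradient `∇g(w; Y)` in `w`. -/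
def gradg (n p : ℕ) (μ : ℝ) (Y : Matrix (Fin n) (Fin p) ℝ)
    (w : EuclideanSpace ℝ (Fin (n - 1))) : EuclideanSpace ℝ (Fin (n - 1)) :=
  gradient (gfun n p μ Y) w

/-- Hessian `∇²g(w; Y)` in `w`, as a continuous linear map. -/
def hessg (n p : ℕ) (μ : ℝ) (Y : Matrix (Fin n) (Fin p) ℝ)
    (w : EuclideanSpace ℝ (Fin (n - 1))) :
    EuclideanSpace ℝ (Fin (n - 1)) →L[ℝ] EuclideanSpace ℝ (Fin (n - 1)) :=
  fderiv ℝ (gradg n p μ Y) w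

/-- The set `Γ = {w : ‖w‖ < √((4n-1)/(4n))}`. -/
def GammaSet (n : ℕ) : Set (EuclideanSpace ℝ (Fin (n - 1))) :=
  {w | ‖w‖ < Real.sqrt ((4 * (n : ℝ) - 1) / (4 * n))}

/-- Spectral (`ℓ²→ℓ²` operator) norm of а matrix. -/
def specNorm {m k : ℕ} (M : Matrix (Fin m) (Fin k) ℝ) : ℝ :=
  ‖LinearMap.toContinuousLinearMap (Matrix.toEuclideanLin M)‖

/-- Largest magnitude of an entry of a matrix. -/
def Minf {m k : ℕ} (M : Matrix (Fin m) (Fin k) ℝ) : ℝ := ⨆ i, ⨆ j, |M i j|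

/-- Condition number: ratio of largest to smallest singular value. -/
def kappa {n : ℕ} (s : Fin n → ℝ) : ℝ := (⨆ i, s i) / (⨅ i, s i)

/-- Signed standard basis vectors `{± e_i}` of `ℝ^n`. -/
def SignedBasis (n : ℕ) : Set (EuclideanSpace ℝ (Fin n)) :=
  {b | ∃ i : Fin n, b = EuclideanSpace.single i (1 : ℝ) ∨ b = -EuclideanSpace.single i (1 : ℝ)}

/-- Set of local minimizers of `f(·; Y)` over the unit sphere `S^{n-1}`. -/
def LocalMins (n p : ℕ) (μ : ℝ) (Y : Matrix (Fin n) (Fin p) ℝ) :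
    Set (EuclideanSpace ℝ (Fin n)) :=
  {q | q ∈ Metric.sphere (0 : EuclideanSpace ℝ (Fin n)) 1 ∧
       IsLocalMinOn (ffun n p μ Y) (Metric.sphere (0 : EuclideanSpace ℝ (Fin n)) 1) q}

/-- Expected objective `E_x[h_μ(q(w)ᵀ x)]` for `x` with i.i.d. `BG(θ)` entries. -/
def Gexp (n : ℕ) (θ μ : ℝ) (w : EuclideanSpace ℝ (Fin (n - 1))) : ℝ :=
  ∫ x, hmu μ (∑ i : Fin n, qmap n w i * x i) ∂(bgVec θ n)

lemma hasDerivAt_tanh (x : ℝ) : HasDerivAt Real.tanh (1 - Real.tanh x ^ 2) x := by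
  have h := (Real.hasDerivAt_sinh x).div (Real.hasDerivAt_cosh x) (Real.cosh_pos x).ne'
  have e : Real.tanh = fun y => Real.sinh y / Real.cosh y := funext Real.tanh_eq_sinh_div_cosh
  rw [e]
  refine h.congr_deriv ?_
  have := (Real.cosh_pos x).ne'
  field_simp

lemma continuous_tanh : Continuous Real.tanh :=
  continuous_iff_continuousAt.2 fun x => (hasDerivAt_tanh x).continuousAt

lemma tanh_monotone : Monotone Real.tanh := by
  refine monotone_of_deriv_nonneg (fun x => (hasDerivAt_tanh x).differentiableAt) fun x => ?_
  rw [(hasDerivAt_tanh x).deriv]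
  nlinarith [Real.tanh_lt_one x, Real.neg_one_lt_tanh x]

lemma abs_tanh_le_one (x : ℝ) : |Real.tanh x| ≤ 1 :=
  abs_le.2 ⟨(Real.neg_one_lt_tanh x).le, (Real.tanh_lt_one x).le⟩

lemma tanh_nonneg_of_nonneg {x : ℝ} (hx : 0 ≤ x) : 0 ≤ Real.tanh x := by
  simpa using tanh_monotone hx

lemma tanh_le_self {x : ℝ} (hx : 0 ≤ x) : Real.tanh x ≤ x := by
  have hd (y : ℝ) : HasDerivAt (fun y => y - Real.tanh y) (Real.tanh y ^ 2) y := by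
    exact ((hasDerivAt_id y).sub (hasDerivAt_tanh y)).congr_deriv (by ring)
  have := monotone_of_deriv_nonneg (fun y => (hd y).differentiableAt)
    (fun y => by rw [(hd y).deriv]; positivity) hx
  simpa using this

lemma self_sub_cube_le_tanh {x : ℝ} (hx : 0 ≤ x) : x - x ^ 3 / 3 ≤ Real.tanh x := by
  have hd (y : ℝ) : HasDerivAt (fun y => Real.tanh y - (y - y ^ 3 / 3))
      (y ^ 2 - Real.tanh y ^ 2) y := by
    refine ((hasDerivAt_tanh y).sub
      ((hasDerivAt_id y).sub ((hasDerivAt_pow 3 y).div_const 3))).congr_deriv ?_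
    norm_num
  have := monotoneOn_of_deriv_nonneg (convex_Ici (0 : ℝ))
    (fun y _ => (hd y).continuousAt.continuousWithinAt)
    (fun y _ => (hd y).differentiableAt.differentiableWithinAt)
    (fun y hy => by
      rw [interior_Ici, Set.mem_Ioi] at hy
      rw [(hd y).deriv]
      nlinarith [tanh_le_self hy.le, tanh_nonneg_of_nonneg hy.le])
    Set.self_mem_Ici hx hx
  simp at this
  linarith

lemma sq_sub_le_mul_tanh (x : ℝ) : x ^ 2 - x ^ 4 / 3 ≤ x * Real.tanh x := by
  rcases le_total 0 x with hx | hx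
  · nlinarith [mul_le_mul_of_nonneg_left (self_sub_cube_le_tanh hx) hx]
  · have h := self_sub_cube_le_tanh (neg_nonneg.2 hx)
    rw [Real.tanh_neg] at h
    nlinarith [mul_le_mul_of_nonneg_left h (neg_nonneg.2 hx)]

lemma mul_tanh_le_mul_tanh_add {t s : ℝ} {μ : ℝ} (hμ : 0 < μ) :
    t * Real.tanh (s / μ) ≤ t * Real.tanh ((t + s) / μ) := by
  rcases le_total 0 t with ht | ht
  · exact mul_le_mul_of_nonneg_left
      (tanh_monotone (div_le_div_of_nonneg_right (by linarith) hμ.le)) ht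
  · exact mul_le_mul_of_nonpos_left
      (tanh_monotone (div_le_div_of_nonneg_right (by linarith) hμ.le)) ht

lemma mul_tanh_mul_le {t a b : ℝ} (hab : a ≤ b) :
    t * Real.tanh (a * t) ≤ t * Real.tanh (b * t) := by
  rcases le_total 0 t with ht | ht
  · exact mul_le_mul_of_nonneg_left (tanh_monotone (by nlinarith)) ht
  · exact mul_le_mul_of_nonpos_left (tanh_monotone (by nlinarith)) ht

lemma quartic_le_mul_tanh_div {t r c μ : ℝ} (hμ : 0 < μ) (hr : 0 < r) (hc : 0 < c)
    (h : μ * c ≤ r) :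
    c / r * t ^ 2 - c ^ 3 / (3 * r ^ 3) * t ^ 4 ≤ t * Real.tanh (t / μ) := by
  have hcr : c / r ≤ 1 / μ := by rw [div_le_div_iff₀ hr hμ]; linarith
  have h1 := mul_tanh_mul_le (t := t) hcr
  have h2 := mul_le_mul_of_nonneg_left (sq_sub_le_mul_tanh (c / r * t)) (div_pos hr hc).le
  have e1 : r / c * ((c / r * t) ^ 2 - (c / r * t) ^ 4 / 3)
      = c / r * t ^ 2 - c ^ 3 / (3 * r ^ 3) * t ^ 4 := by field_simp
  have e2 : r / c * (c / r * t * Real.tanh (c / r * t)) = t * Real.tanh (c / r * t) := by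
    field_simp
  rw [e1, e2] at h2
  rw [one_div_mul_eq_div] at h1
  exact h2.trans h1

lemma hasDerivAt_hmu {μ : ℝ} (hμ : 0 < μ) (z : ℝ) :
    HasDerivAt (hmu μ) (Real.tanh (z / μ)) z := by
  have h := (((hasDerivAt_id z).div_const μ).cosh.log (Real.cosh_pos _).ne').const_mul μ
  refine h.congr_deriv ?_
  rw [Real.tanh_eq_sinh_div_cosh]
  simp only [id]
  field_simp

lemma abs_hmu_le {μ : ℝ} (hμ : 0 < μ) (z : ℝ) : |hmu μ z| ≤ |z| := by
  have h0 : 0 ≤ Real.log (Real.cosh (z / μ)) := Real.log_nonneg (Real.one_le_cosh _)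
  have h1 : Real.log (Real.cosh (z / μ)) ≤ |z / μ| := by
    rw [Real.log_le_iff_le_exp (Real.cosh_pos _), ← Real.cosh_abs, Real.cosh_eq]
    have := Real.exp_le_exp.2 (show -|z / μ| ≤ |z / μ| by linarith [abs_nonneg (z / μ)])
    linarith
  rw [hmu, abs_of_nonneg (mul_nonneg hμ.le h0)]
  refine (mul_le_mul_of_nonneg_left h1 hμ.le).trans_eq ?_
  rw [abs_div, abs_of_pos hμ]
  field_simp

lemma continuous_hmu {μ : ℝ} (hμ : 0 < μ) : Continuous (hmu μ) :=
  continuous_iff_continuousAt.2 fun z => (hasDerivAt_hmu hμ z).continuousAt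

lemma pow_four_le_cosh (x : ℝ) : x ^ 4 ≤ 24 * (Real.cosh x - 1 - x ^ 2 / 2) := by
  have h := sum_le_hasSum (Finset.range 3) (fun i _ => by
    rw [pow_mul]; positivity) (Real.hasSum_cosh x)
  simp [Finset.sum_range_succ, Nat.factorial] at h
  linarith

lemma integrable_pow_gaussianReal (k : ℕ) :
    Integrable (fun x : ℝ => x ^ k) (gaussianReal 0 1) := by
  have h := (memLp_id_gaussianReal' (μ := 0) (v := 1) k (by simp)).integrable_norm_pow'
  exact (integrable_norm_iff (by fun_prop)).1 (by simpa [norm_pow] using h)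

lemma integral_sq_gaussianReal : ∫ x : ℝ, x ^ 2 ∂gaussianReal 0 1 = 1 := by
  have h := variance_fun_id_gaussianReal (μ := 0) (v := 1)
  rw [variance_of_integral_eq_zero (by fun_prop) (by simp)] at h
  simpa using h

lemma integral_pow_four_gaussianReal_le : ∫ x : ℝ, x ^ 4 ∂gaussianReal 0 1 ≤ 4 := by
  have e (t : ℝ) : ∫ x : ℝ, rexp (t * x) ∂gaussianReal 0 1 = rexp (t ^ 2 / 2) := by
    have := congrFun (mgf_fun_id_gaussianReal (μ := 0) (v := 1)) t
    simpa [mgf] using this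
  have ic (t : ℝ) : Integrable (fun x : ℝ => rexp (t * x)) (gaussianReal 0 1) :=
    integrable_exp_mul_gaussianReal t
  have hcosh : Integrable Real.cosh (gaussianReal 0 1) := by
    refine (((ic 1).add (ic (-1))).div_const 2).congr (.of_forall fun x => ?_)
    simp [Real.cosh_eq]
  have ecosh : ∫ x, Real.cosh x ∂gaussianReal 0 1 = rexp (1 / 2) := by
    have : ∀ x : ℝ, Real.cosh x = (rexp (1 * x) + rexp (-1 * x)) / 2 := fun x => by
      simp [Real.cosh_eq]
    simp_rw [this]
    rw [integral_div, integral_add (ic 1) (ic (-1)), e, e]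
    norm_num
  have i2 := integrable_pow_gaussianReal 2
  have i0 : Integrable (fun _ : ℝ => (1 : ℝ)) (gaussianReal 0 1) := integrable_const _
  have ic1 : Integrable (fun x => Real.cosh x - 1) (gaussianReal 0 1) := hcosh.sub i0
  have hm := integral_mono (integrable_pow_gaussianReal 4)
    ((ic1.sub (i2.div_const 2)).const_mul 24) pow_four_le_cosh
  simp only [Pi.sub_apply] at hm
  rw [integral_const_mul, integral_sub ic1 (i2.div_const 2), integral_div,
    integral_sq_gaussianReal] at hm
  rw [integral_sub hcosh i0, ecosh] at hm
  simp at hm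
  have hexp : rexp (2⁻¹) ≤ 5 / 3 := by
    have h1 : rexp (2⁻¹) ^ 2 = rexp 1 := by rw [← Real.exp_nat_mul]; norm_num
    have h2 := Real.exp_one_lt_d9
    nlinarith [Real.exp_pos (2⁻¹)]
  linarith

lemma isProbabilityMeasure_bg {θ : ℝ} (h0 : 0 ≤ θ) (h1 : θ ≤ 1) :
    IsProbabilityMeasure (bg θ) := by
  constructor
  simp only [bg, Measure.add_apply, Measure.smul_apply, measure_univ]
  simp only [ENNReal.smul_def, smul_eq_mul, mul_one]
  rw [← ENNReal.coe_add, ← Real.toNNReal_add h0 (by linarith)]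
  simp

lemma integrable_bg {θ : ℝ} {f : ℝ → ℝ} (hf : Integrable f (gaussianReal 0 1)) :
    Integrable f (bg θ) :=
  (hf.smul_measure_nnreal).add_measure
    ((integrable_dirac (by simp)).smul_measure_nnreal)

lemma integral_bg {θ : ℝ} (h0 : 0 ≤ θ) (h1 : θ ≤ 1) {f : ℝ → ℝ}
    (hf : Integrable f (gaussianReal 0 1)) :
    ∫ x, f x ∂bg θ = θ * ∫ x, f x ∂gaussianReal 0 1 + (1 - θ) * f 0 := by
  rw [bg, integral_add_measure hf.smul_measure_nnreal
    ((integrable_dirac (by simp)).smul_measure_nnreal),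
    integral_smul_nnreal_measure, integral_smul_nnreal_measure, integral_dirac]
  simp [NNReal.smul_def, h0, h1]

lemma memLp_four_bg (θ : ℝ) : MemLp (fun x : ℝ => x) 4 (bg θ) := by
  rw [← integrable_norm_rpow_iff (by fun_prop) (by norm_num) (by norm_num)]
  refine (integrable_bg (integrable_pow_gaussianReal 4).norm).congr (.of_forall fun x => ?_)
  simp only [norm_pow, ENNReal.toReal_ofNat]
  norm_cast

lemma memLp_four_dot {ν : Measure ℝ} [IsProbabilityMeasure ν] (hν : MemLp (fun x : ℝ => x) 4 ν)
    {m : ℕ} (v : Fin m → ℝ) :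
    MemLp (fun y : Fin m → ℝ => ∑ i, v i * y i) 4 (Measure.pi fun _ => ν) := by
  refine memLp_finsetSum _ fun i _ => MemLp.const_mul ?_ _
  exact hν.comp_measurePreserving (measurePreserving_eval (fun _ : Fin m => ν) i)

lemma integrable_pow_of_memLp_four {α : Type*} [MeasurableSpace α] {P : Measure α}
    [IsProbabilityMeasure P] {f : α → ℝ} (hf : MemLp f 4 P) {k : ℕ} (hk : k ≤ 4) :
    Integrable (fun a => f a ^ k) P := by
  have h : MemLp f k P := hf.mono_exponent (by exact_mod_cast hk)
  exact (integrable_norm_iff (hf.1.pow k)).1 (by simpa [norm_pow] using h.integrable_norm_pow')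

lemma integral_pi_succ {ν : Measure ℝ} [IsProbabilityMeasure ν] {m : ℕ}
    (f : (Fin (m + 1) → ℝ) → ℝ) (j : Fin (m + 1)) :
    ∫ x, f x ∂(Measure.pi fun _ => ν) =
      ∫ p : ℝ × (Fin m → ℝ), f (j.insertNth p.1 p.2) ∂(ν.prod (Measure.pi fun _ => ν)) :=
  ((measurePreserving_piFinSuccAbove (fun _ : Fin (m + 1) => ν) j).symm.integral_comp'
    (f := (MeasurableEquiv.piFinSuccAbove (fun _ => ℝ) j).symm) f).symm

lemma moments_dot {ν : Measure ℝ} [IsProbabilityMeasure ν] {θ : ℝ}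
    (hν : MemLp (fun x : ℝ => x) 4 ν) (hθ0 : 0 ≤ θ) (hθ1 : θ ≤ 1)
    (m1 : ∫ x, x ∂ν = 0) (m2 : ∫ x, x ^ 2 ∂ν = θ) (m4 : ∫ x, x ^ 4 ∂ν ≤ 4 * θ)
    {m : ℕ} (v : Fin m → ℝ) :
    ∫ y : Fin m → ℝ, (∑ i, v i * y i) ∂(Measure.pi fun _ => ν) = 0 ∧
    ∫ y : Fin m → ℝ, (∑ i, v i * y i) ^ 2 ∂(Measure.pi fun _ => ν) = θ * ∑ i, v i ^ 2 ∧
    ∫ y : Fin m → ℝ, (∑ i, v i * y i) ^ 4 ∂(Measure.pi fun _ => ν) ≤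
      4 * θ * (∑ i, v i ^ 2) ^ 2 := by
  induction m with
  | zero => simp
  | succ m ih =>
    obtain ⟨h1, h2, h4⟩ := ih (fun i => v i.succ)
    have hW := memLp_four_dot hν (fun i => v i.succ)
    set P : Measure (Fin m → ℝ) := Measure.pi fun _ => ν with hP
    set W : (Fin m → ℝ) → ℝ := fun y => ∑ i, v i.succ * y i with hWdef
    have hi (a b : ℕ) (ha : a ≤ 4) (hb : b ≤ 4) :
        Integrable (fun p : ℝ × (Fin m → ℝ) => p.1 ^ a * W p.2 ^ b) (ν.prod P) :=
      (integrable_pow_of_memLp_four hν ha).mul_prod (integrable_pow_of_memLp_four hW hb)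
    have he (a b : ℕ) : ∫ p : ℝ × (Fin m → ℝ), p.1 ^ a * W p.2 ^ b ∂(ν.prod P) =
        (∫ x, x ^ a ∂ν) * ∫ y, W y ^ b ∂P :=
      integral_prod_mul (fun x : ℝ => x ^ a) (fun y => W y ^ b)
    have hsum (p : ℝ × (Fin m → ℝ)) :
        ∑ i, v i * (Fin.insertNth 0 p.1 p.2 : Fin (m + 1) → ℝ) i = v 0 * p.1 + W p.2 := by
      simp [Fin.sum_univ_succ, hWdef]
    have m1' : ∫ x, x ^ 1 ∂ν = 0 := by simpa using m1
    have h1' : ∫ y, W y ^ 1 ∂P = 0 := by simpa using h1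
    have h0' : ∫ y, W y ^ 0 ∂P = 1 := by simp
    have m0' : ∫ x : ℝ, x ^ 0 ∂ν = 1 := by simp
    rw [Fin.sum_univ_succ]
    refine ⟨?_, ?_, ?_⟩
    · rw [integral_pi_succ _ 0]
      simp_rw [hsum]
      have e (p : ℝ × (Fin m → ℝ)) : v 0 * p.1 + W p.2 =
          v 0 * (p.1 ^ 1 * W p.2 ^ 0) + p.1 ^ 0 * W p.2 ^ 1 := by ring
      simp_rw [e]
      rw [integral_add ((hi 1 0 (by simp) (by simp)).const_mul _) (hi 0 1 (by simp) (by simp)),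
        integral_const_mul, he, he, m1', h1']
      ring
    · rw [integral_pi_succ _ 0]
      simp_rw [hsum]
      have e (p : ℝ × (Fin m → ℝ)) : (v 0 * p.1 + W p.2) ^ 2 =
          v 0 ^ 2 * (p.1 ^ 2 * W p.2 ^ 0) + 2 * v 0 * (p.1 ^ 1 * W p.2 ^ 1)
            + p.1 ^ 0 * W p.2 ^ 2 := by ring
      simp_rw [e]
      have i1 := (hi 2 0 (by simp) (by simp)).const_mul (v 0 ^ 2)
      have i2 := (hi 1 1 (by simp) (by simp)).const_mul (2 * v 0)
      rw [integral_add (i1.fun_add i2) (hi 0 2 (by simp) (by simp)), integral_add i1 i2,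
        integral_const_mul, integral_const_mul, he, he, he, m1', h1', h2, m2, h0', m0']
      ring
    · rw [integral_pi_succ _ 0]
      simp_rw [hsum]
      have e (p : ℝ × (Fin m → ℝ)) : (v 0 * p.1 + W p.2) ^ 4 =
          v 0 ^ 4 * (p.1 ^ 4 * W p.2 ^ 0) + 4 * v 0 ^ 3 * (p.1 ^ 3 * W p.2 ^ 1)
            + 6 * v 0 ^ 2 * (p.1 ^ 2 * W p.2 ^ 2) + 4 * v 0 * (p.1 ^ 1 * W p.2 ^ 3)
            + p.1 ^ 0 * W p.2 ^ 4 := by ring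
      simp_rw [e]
      have i1 := (hi 4 0 (by simp) (by simp)).const_mul (v 0 ^ 4)
      have i2 := (hi 3 1 (by simp) (by simp)).const_mul (4 * v 0 ^ 3)
      have i3 := (hi 2 2 (by simp) (by simp)).const_mul (6 * v 0 ^ 2)
      have i4 := (hi 1 3 (by simp) (by simp)).const_mul (4 * v 0)
      rw [integral_add (((i1.fun_add i2).fun_add i3).fun_add i4) (hi 0 4 (by simp) (by simp)),
        integral_add ((i1.fun_add i2).fun_add i3) i4, integral_add (i1.fun_add i2) i3, integral_add i1 i2]
      have h2' : ∫ y, W y ^ 2 ∂P = θ * ∑ i : Fin m, v i.succ ^ 2 := h2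
      have h4' : ∫ y, W y ^ 4 ∂P ≤ 4 * θ * (∑ i : Fin m, v i.succ ^ 2) ^ 2 := h4
      simp only [integral_const_mul, he, m1', h1', h2', m2, h0', m0']
      have hS : 0 ≤ ∑ i : Fin m, v i.succ ^ 2 := by positivity
      set S := ∑ i : Fin m, v i.succ ^ 2
      have t1 := mul_le_mul_of_nonneg_left m4 (show 0 ≤ v 0 ^ 4 by positivity)
      have t2 : 6 * v 0 ^ 2 * (θ * (θ * S)) ≤ 8 * v 0 ^ 2 * (θ * S) := by
        have : 0 ≤ v 0 ^ 2 * (θ * S) := by positivity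
        nlinarith
      nlinarith

lemma Gexp_succ (m : ℕ) (θ μ : ℝ) [IsProbabilityMeasure (bg θ)]
    (w : EuclideanSpace ℝ (Fin m)) :
    Gexp (m + 1) θ μ w =
      ∫ p : ℝ × (Fin m → ℝ), hmu μ (∑ i, w i * p.2 i + √(1 - ‖w‖ ^ 2) * p.1)
        ∂((bg θ).prod (Measure.pi fun _ => bg θ)) := by
  rw [Gexp, bgVec, integral_pi_succ _ (Fin.last m)]
  congr 1
  ext p
  congr 1
  rw [Fin.sum_univ_castSucc]
  simp [qmap]

lemma norm_toLp_le_sum_abs {m : ℕ} (y : Fin m → ℝ) : ‖WithLp.toLp 2 y‖ ≤ ∑ i, |y i| := by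
  rw [EuclideanSpace.norm_eq]
  refine Real.sqrt_le_iff.2 ⟨by positivity, ?_⟩
  exact Finset.sum_sq_le_sq_sum_of_nonneg fun _ _ => norm_nonneg _

lemma hasFDerivAt_sqrt_one_sub_norm_sq {E : Type*} [NormedAddCommGroup E] [InnerProductSpace ℝ E]
    {w : E} (hw : ‖w‖ < 1) :
    HasFDerivAt (fun w : E => √(1 - ‖w‖ ^ 2)) (-(1 / √(1 - ‖w‖ ^ 2)) • innerSL ℝ w) w := by
  have h0 : 0 < 1 - ‖w‖ ^ 2 := by nlinarith [norm_nonneg w]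
  have h := ((hasStrictFDerivAt_norm_sq w).hasFDerivAt.const_sub 1).sqrt h0.ne'
  refine h.congr_fderiv ?_
  ext u
  have := (Real.sqrt_pos.2 h0).ne'
  simp
  field_simp

/-- Derivative of `w ↦ h_μ(⟨w, y⟩ + √(1 - ‖w‖²) a)`. -/
def hmuFDeriv {m : ℕ} (μ : ℝ) (w : EuclideanSpace ℝ (Fin m)) (p : ℝ × (Fin m → ℝ)) :
    EuclideanSpace ℝ (Fin m) →L[ℝ] ℝ :=
  Real.tanh ((∑ i, w i * p.2 i + √(1 - ‖w‖ ^ 2) * p.1) / μ) •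
    (innerSL ℝ (WithLp.toLp 2 p.2) + p.1 • (-(1 / √(1 - ‖w‖ ^ 2)) • innerSL ℝ w))

lemma hasFDerivAt_hmu {m : ℕ} {μ : ℝ} (hμ : 0 < μ) {w : EuclideanSpace ℝ (Fin m)}
    (hw : ‖w‖ < 1) (p : ℝ × (Fin m → ℝ)) :
    HasFDerivAt (fun w : EuclideanSpace ℝ (Fin m) =>
      hmu μ (∑ i, w i * p.2 i + √(1 - ‖w‖ ^ 2) * p.1)) (hmuFDeriv μ w p) w := by
  have h1 : HasFDerivAt (fun w : EuclideanSpace ℝ (Fin m) => ∑ i, w i * p.2 i)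
      (innerSL ℝ (WithLp.toLp 2 p.2)) w := by
    have := (innerSL ℝ (WithLp.toLp 2 p.2 : EuclideanSpace ℝ (Fin m))).hasFDerivAt (x := w)
    refine this.congr_of_eventuallyEq (.of_forall fun u => ?_)
    simp [PiLp.inner_apply]
  exact (hasDerivAt_hmu hμ _).comp_hasFDerivAt w
    (h1.add ((hasFDerivAt_sqrt_one_sub_norm_sq hw).mul_const p.1))

lemma norm_hmuFDeriv_le {m : ℕ} (μ : ℝ) {w : EuclideanSpace ℝ (Fin m)}
    (hw : ‖w‖ ≤ 1 / 2) (p : ℝ × (Fin m → ℝ)) :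
    ‖hmuFDeriv μ w p‖ ≤ ∑ i, |p.2 i| + |p.1| := by
  have hρ : 1 / 2 ≤ √(1 - ‖w‖ ^ 2) :=
    Real.le_sqrt_of_sq_le (by nlinarith [norm_nonneg w])
  have hq : 1 / √(1 - ‖w‖ ^ 2) * ‖w‖ ≤ 1 := by
    rw [one_div_mul_eq_div, div_le_one (by linarith)]
    linarith
  rw [hmuFDeriv, norm_smul, Real.norm_eq_abs]
  refine (mul_le_of_le_one_left (norm_nonneg _) (abs_tanh_le_one _)).trans ?_
  refine (norm_add_le _ _).trans (add_le_add ?_ ?_)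
  · rw [innerSL_apply_norm]
    exact norm_toLp_le_sum_abs _
  · rw [norm_smul, norm_smul, innerSL_apply_norm, norm_neg, Real.norm_eq_abs,
      Real.norm_of_nonneg (by positivity)]
    exact mul_le_of_le_one_right (abs_nonneg _) hq

lemma continuous_hmuFDeriv {m : ℕ} (μ : ℝ) (w : EuclideanSpace ℝ (Fin m)) :
    Continuous (hmuFDeriv μ w) := by
  unfold hmuFDeriv
  refine (continuous_tanh.comp (by fun_prop)).smul ?_
  have : Continuous fun p : ℝ × (Fin m → ℝ) =>
      innerSL ℝ (WithLp.toLp 2 p.2 : EuclideanSpace ℝ (Fin m)) :=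
    (innerSL ℝ).continuous.comp ((PiLp.continuous_toLp 2 _).comp continuous_snd)
  exact this.add (continuous_fst.smul continuous_const)

lemma integrable_sum_abs_add_abs {ν : Measure ℝ} [IsProbabilityMeasure ν]
    (hν : Integrable (fun x : ℝ => x) ν) (m : ℕ) :
    Integrable (fun p : ℝ × (Fin m → ℝ) => ∑ i, |p.2 i| + |p.1|)
      (ν.prod (Measure.pi fun _ => ν)) := by
  refine Integrable.add ?_ (hν.abs.comp_fst _)
  refine integrable_finsetSum _ fun i _ => ?_
  have h := (measurePreserving_eval (fun _ : Fin m => ν) i).integrable_comp_of_integrable hν.abs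
  exact h.comp_snd ν

lemma integrable_hmuFDeriv {ν : Measure ℝ} [IsProbabilityMeasure ν]
    (hν : Integrable (fun x : ℝ => x) ν) {m : ℕ} (μ : ℝ) {w : EuclideanSpace ℝ (Fin m)}
    (hw : ‖w‖ ≤ 1 / 2) :
    Integrable (hmuFDeriv μ w) (ν.prod (Measure.pi fun _ => ν)) :=
  (integrable_sum_abs_add_abs hν m).mono' (continuous_hmuFDeriv μ w).aestronglyMeasurable
    (.of_forall (norm_hmuFDeriv_le μ hw))

lemma hasFDerivAt_integral_hmu {ν : Measure ℝ} [IsProbabilityMeasure ν]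
    (hν : Integrable (fun x : ℝ => x) ν) {m : ℕ} {μ : ℝ} (hμ : 0 < μ)
    {w : EuclideanSpace ℝ (Fin m)} (hw : ‖w‖ < 1 / 2) :
    HasFDerivAt (fun w : EuclideanSpace ℝ (Fin m) => ∫ p : ℝ × (Fin m → ℝ),
        hmu μ (∑ i, w i * p.2 i + √(1 - ‖w‖ ^ 2) * p.1) ∂(ν.prod (Measure.pi fun _ => ν)))
      (∫ p, hmuFDeriv μ w p ∂(ν.prod (Measure.pi fun _ => ν))) w := by
  have hcont (u : EuclideanSpace ℝ (Fin m)) : Continuous fun p : ℝ × (Fin m → ℝ) =>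
      hmu μ (∑ i, u i * p.2 i + √(1 - ‖u‖ ^ 2) * p.1) :=
    (continuous_hmu hμ).comp (by fun_prop)
  refine hasFDerivAt_integral_of_dominated_of_fderiv_le
    (bound := fun p : ℝ × (Fin m → ℝ) => ∑ i, |p.2 i| + |p.1|)
    (s := Metric.ball 0 (1 / 2)) (Metric.isOpen_ball.mem_nhds (by simpa using hw))
    (.of_forall fun u => (hcont u).aestronglyMeasurable) ?_
    (continuous_hmuFDeriv μ w).aestronglyMeasurable ?_ (integrable_sum_abs_add_abs hν m) ?_
  · refine (integrable_sum_abs_add_abs hν m).mono' (hcont w).aestronglyMeasurable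
      (.of_forall fun p => (abs_hmu_le hμ _).trans ((abs_add_le _ _).trans (add_le_add ?_ ?_)))
    · refine (Finset.abs_sum_le_sum_abs _ _).trans (Finset.sum_le_sum fun i _ => ?_)
      rw [abs_mul]
      refine mul_le_of_le_one_left (abs_nonneg _) ?_
      have := PiLp.norm_apply_le w i
      rw [Real.norm_eq_abs] at this
      linarith
    · rw [abs_mul, abs_of_nonneg (Real.sqrt_nonneg _)]
      exact mul_le_of_le_one_left (abs_nonneg _) (Real.sqrt_le_one.2 (by nlinarith [sq_nonneg ‖w‖]))
  · exact .of_forall fun p u hu => norm_hmuFDeriv_le μ (by simpa using (mem_ball_zero_iff.1 hu).le) p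
  · exact .of_forall fun p u hu =>
      hasFDerivAt_hmu hμ (by have := mem_ball_zero_iff.1 hu; linarith) p

lemma hmuFDeriv_apply_self {m : ℕ} (μ : ℝ) (w : EuclideanSpace ℝ (Fin m))
    (p : ℝ × (Fin m → ℝ)) :
    hmuFDeriv μ w p w =
      Real.tanh ((∑ i, w i * p.2 i + √(1 - ‖w‖ ^ 2) * p.1) / μ) *
        (∑ i, w i * p.2 i - ‖w‖ ^ 2 / √(1 - ‖w‖ ^ 2) * p.1) := by
  have h : inner ℝ (WithLp.toLp 2 p.2) w = ∑ i, w i * p.2 i := by simp [PiLp.inner_apply]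
  simp only [hmuFDeriv, _root_.smul_apply, _root_.add_apply, innerSL_apply_apply,
    real_inner_self_eq_norm_sq, smul_eq_mul, h]
  ring

lemma integral_bg_indicator_zero {θ : ℝ} (h0 : 0 ≤ θ) (h1 : θ ≤ 1) :
    Integrable (Set.indicator {(0 : ℝ)} fun _ => (1 : ℝ)) (bg θ) ∧
      ∫ x, Set.indicator {(0 : ℝ)} (fun _ => (1 : ℝ)) x ∂bg θ = 1 - θ := by
  have hi : Integrable (Set.indicator {(0 : ℝ)} fun _ => (1 : ℝ)) (gaussianReal 0 1) :=
    (integrable_const _).indicator (measurableSet_singleton 0)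
  refine ⟨integrable_bg hi, ?_⟩
  have := nullSingletonClass_gaussianReal (μ := 0) (v := 1) one_ne_zero
  rw [integral_bg h0 h1 hi, integral_indicator_const _ (measurableSet_singleton 0)]
  simp [measureReal_def]

lemma integral_abs_bg_le {θ : ℝ} (h0 : 0 ≤ θ) (h1 : θ ≤ 1) : ∫ x, |x| ∂bg θ ≤ θ := by
  have hi : Integrable (fun x : ℝ => x) (gaussianReal 0 1) := by
    simpa using integrable_pow_gaussianReal 1
  rw [integral_bg h0 h1 hi.abs]
  have i2 := integrable_pow_gaussianReal 2
  have h : ∫ x : ℝ, |x| ∂gaussianReal 0 1 ≤ ∫ x : ℝ, (1 + x ^ 2) / 2 ∂gaussianReal 0 1 :=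
    integral_mono hi.abs (((integrable_const 1).add i2).div_const 2) fun x => by
      dsimp only
      nlinarith [sq_nonneg (|x| - 1), sq_abs x]
  rw [integral_div, integral_add (integrable_const 1) i2, integral_sq_gaussianReal] at h
  simp at h
  simpa using mul_le_of_le_one_right h0 h

lemma moments_bg {θ : ℝ} (h0 : 0 ≤ θ) (h1 : θ ≤ 1) :
    ∫ x, x ∂bg θ = 0 ∧ ∫ x, x ^ 2 ∂bg θ = θ ∧ ∫ x, x ^ 4 ∂bg θ ≤ 4 * θ := by
  have hi : Integrable (fun x : ℝ => x) (gaussianReal 0 1) := by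
    simpa using integrable_pow_gaussianReal 1
  refine ⟨?_, ?_, ?_⟩
  · rw [integral_bg h0 h1 hi]
    simp
  · rw [integral_bg h0 h1 (integrable_pow_gaussianReal 2), integral_sq_gaussianReal]
    simp
  · rw [integral_bg h0 h1 (integrable_pow_gaussianReal 4)]
    have := mul_le_mul_of_nonneg_left integral_pow_four_gaussianReal_le h0
    norm_num
    linarith

lemma le_hmuFDeriv_apply_self {m : ℕ} {μ c : ℝ} (hμ : 0 < μ) (hc : 0 < c)
    {w : EuclideanSpace ℝ (Fin m)} (hw : μ * c ≤ ‖w‖) (p : ℝ × (Fin m → ℝ)) :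
    Real.tanh (√(1 - ‖w‖ ^ 2) * p.1 / μ) * (∑ i, w i * p.2 i)
      + Set.indicator {(0 : ℝ)} (fun _ => (1 : ℝ)) p.1 *
        (c / ‖w‖ * (∑ i, w i * p.2 i) ^ 2 - c ^ 3 / (3 * ‖w‖ ^ 3) * (∑ i, w i * p.2 i) ^ 4)
      - ‖w‖ ^ 2 / √(1 - ‖w‖ ^ 2) * |p.1| ≤ hmuFDeriv μ w p w := by
  rw [hmuFDeriv_apply_self]
  set t := ∑ i, w i * p.2 i
  set ρ := √(1 - ‖w‖ ^ 2)
  by_cases hp : p.1 = 0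
  · have := quartic_le_mul_tanh_div (t := t) hμ ((mul_pos hμ hc).trans_le hw) hc hw
    simp [hp]
    linarith
  · have h1 := mul_tanh_le_mul_tanh_add (t := t) (s := ρ * p.1) hμ
    have h2 : Real.tanh ((t + ρ * p.1) / μ) * p.1 ≤ |p.1| :=
      (le_abs_self _).trans (by
        rw [abs_mul]
        exact mul_le_of_le_one_left (abs_nonneg _) (abs_tanh_le_one _))
    have h3 := mul_le_mul_of_nonneg_left h2 (show 0 ≤ ‖w‖ ^ 2 / ρ by positivity)
    simp only [Set.indicator, Set.mem_singleton_iff, hp, if_false, zero_mul, add_zero]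
    linarith

lemma le_integral_hmuFDeriv {m : ℕ} {θ μ c : ℝ} (h0 : 0 ≤ θ) (h1 : θ ≤ 1)
    [IsProbabilityMeasure (bg θ)] (hμ : 0 < μ) (hc : 0 < c)
    {w : EuclideanSpace ℝ (Fin m)} (hw : μ * c ≤ ‖w‖) (hw' : ‖w‖ ≤ 1 / 2) :
    (1 - θ) * (θ * ‖w‖ * (c - 4 * c ^ 3 / 3)) - ‖w‖ ^ 2 / √(1 - ‖w‖ ^ 2) * θ ≤
      ∫ p, hmuFDeriv μ w p w ∂((bg θ).prod (Measure.pi fun _ => bg θ)) := by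
  have hr : 0 < ‖w‖ := (mul_pos hμ hc).trans_le hw
  obtain ⟨m1, m2, m4⟩ := moments_bg h0 h1
  have hν := memLp_four_bg θ
  have hν1 : Integrable (fun x : ℝ => x) (bg θ) := by
    simpa using integrable_pow_of_memLp_four hν (k := 1) (by simp)
  have hWL := memLp_four_dot hν w
  obtain ⟨w1, w2, w4⟩ := moments_dot hν h0 h1 m1 m2 m4 w
  obtain ⟨iI, eI⟩ := integral_bg_indicator_zero h0 h1
  rw [← EuclideanSpace.real_norm_sq_eq] at w2 w4
  have iW : Integrable (fun y : Fin m → ℝ => ∑ i, w i * y i) (Measure.pi fun _ => bg θ) := by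
    simpa using integrable_pow_of_memLp_four hWL (k := 1) (by simp)
  have iW2 := (integrable_pow_of_memLp_four hWL (k := 2) (by simp)).const_mul (c / ‖w‖)
  have iW4 := (integrable_pow_of_memLp_four hWL (k := 4) (by simp)).const_mul
    (c ^ 3 / (3 * ‖w‖ ^ 3))
  have iT : Integrable (fun a : ℝ => Real.tanh (√(1 - ‖w‖ ^ 2) * a / μ)) (bg θ) :=
    (integrable_const (1 : ℝ)).mono'
      (continuous_tanh.comp (by fun_prop)).aestronglyMeasurable
      (.of_forall fun a => abs_tanh_le_one _)
  have j1 := iT.mul_prod iW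
  have j2 := iI.mul_prod (iW2.sub iW4)
  simp only [Pi.sub_apply] at j2
  have j3 := (hν1.abs.comp_fst (Measure.pi fun _ : Fin m => bg θ)).const_mul
    (‖w‖ ^ 2 / √(1 - ‖w‖ ^ 2))
  have hint : Integrable (fun p => hmuFDeriv μ w p w)
      ((bg θ).prod (Measure.pi fun _ => bg θ)) :=
    (integrable_hmuFDeriv hν1 μ hw').apply_continuousLinearMap w
  refine le_trans ?_ (integral_mono ((j1.add j2).sub j3) hint (le_hmuFDeriv_apply_self hμ hc hw))
  have e := integral_sub (j1.add j2) j3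
  simp only [Pi.sub_apply, Pi.add_apply] at e ⊢
  rw [e, integral_add j1 j2]
  rw [integral_prod_mul (fun a : ℝ => Real.tanh (√(1 - ‖w‖ ^ 2) * a / μ))
      (fun y : Fin m → ℝ => ∑ i, w i * y i), w1, mul_zero, zero_add,
    integral_prod_mul (Set.indicator {(0 : ℝ)} fun _ => (1 : ℝ))
      (fun y : Fin m → ℝ => c / ‖w‖ * (∑ i, w i * y i) ^ 2
        - c ^ 3 / (3 * ‖w‖ ^ 3) * (∑ i, w i * y i) ^ 4), eI, integral_sub iW2 iW4,
    integral_const_mul, integral_const_mul, integral_const_mul, w2,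
    integral_fun_fst (μ := bg θ) (ν := Measure.pi fun _ : Fin m => bg θ) (fun x : ℝ => |x|)]
  simp only [probReal_univ, one_smul]
  refine sub_le_sub (mul_le_mul_of_nonneg_left ?_ (by linarith))
    (mul_le_mul_of_nonneg_left (integral_abs_bg_le h0 h1) (by positivity))
  have h4 := mul_le_mul_of_nonneg_left w4 (show 0 ≤ c ^ 3 / (3 * ‖w‖ ^ 3) by positivity)
  have e4 : c ^ 3 / (3 * ‖w‖ ^ 3) * (4 * θ * (‖w‖ ^ 2) ^ 2) = θ * ‖w‖ * (4 * c ^ 3 / 3) := by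
    field_simp
  have e2 : c / ‖w‖ * (θ * ‖w‖ ^ 2) = θ * ‖w‖ * c := by field_simp
  rw [e4] at h4
  rw [e2]
  linarith

lemma gradient_Gexp_inner_self {m : ℕ} {θ μ : ℝ} [IsProbabilityMeasure (bg θ)] (hμ : 0 < μ)
    {w : EuclideanSpace ℝ (Fin m)} (hw : ‖w‖ < 1 / 2) :
    inner ℝ w (gradient (Gexp (m + 1) θ μ : EuclideanSpace ℝ (Fin m) → ℝ) w) =
      ∫ p, hmuFDeriv μ w p w ∂((bg θ).prod (Measure.pi fun _ => bg θ)) := by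
  have hν1 : Integrable (fun x : ℝ => x) (bg θ) := by
    simpa using integrable_pow_of_memLp_four (memLp_four_bg θ) (k := 1) (by simp)
  have hd := hasFDerivAt_integral_hmu hν1 hμ hw
  rw [← ContinuousLinearMap.integral_apply (integrable_hmuFDeriv hν1 μ hw.le) w, ← hd.fderiv,
    ← funext (Gexp_succ m θ μ), real_inner_comm, gradient, InnerProductSpace.toDual_symm_apply]

lemma large_gradient_Gexp_succ (m : ℕ) (θ μ : ℝ) (hθ : θ ∈ Set.Ioo (0 : ℝ) (1 / 2))
    (hμ0 : 0 < μ) (w : EuclideanSpace ℝ (Fin m))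
    (hw1 : μ / (4 * √2) ≤ ‖w‖) (hw2 : ‖w‖ ≤ 1 / (20 * √5)) :
    θ / (20 * √(2 * π)) ≤
      inner ℝ w (gradient (Gexp (m + 1) θ μ : EuclideanSpace ℝ (Fin m) → ℝ) w) / ‖w‖ := by
  obtain ⟨hθ0, hθ1⟩ := hθ
  have := isProbabilityMeasure_bg hθ0.le (by linarith)
  have hr : 0 < ‖w‖ := lt_of_lt_of_le (by positivity) hw1
  have hr' : ‖w‖ ≤ 1 / 40 := hw2.trans <| by
    have : (2 : ℝ) ≤ √5 := Real.le_sqrt_of_sq_le (by norm_num)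
    exact one_div_le_one_div_of_le (by norm_num) (by linarith)
  set c : ℝ := 1 / (4 * √2) with hc
  have hc2 : c ^ 2 = 1 / 32 := by
    rw [hc, div_pow, mul_pow, Real.sq_sqrt (by norm_num)]
    norm_num
  have hc0 : 0 < c := by positivity
  have hc1 : 17 / 100 ≤ c := by nlinarith
  have hmain := le_integral_hmuFDeriv hθ0.le (by linarith) hμ0 hc0 (w := w)
    (by rwa [hc, mul_one_div]) (by linarith)
  rw [gradient_Gexp_inner_self hμ0 (by linarith), le_div_iff₀ hr]
  refine le_trans ?_ hmain
  have hρ : 9 / 10 ≤ √(1 - ‖w‖ ^ 2) := Real.le_sqrt_of_sq_le (by nlinarith)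
  have hq : ‖w‖ / √(1 - ‖w‖ ^ 2) ≤ 1 / 36 := by
    rw [div_le_iff₀ (by linarith)]
    linarith
  have hπ : θ / (20 * √(2 * π)) ≤ θ / 40 := by
    have : (2 : ℝ) ≤ √(2 * π) := Real.le_sqrt_of_sq_le (by nlinarith [Real.pi_gt_three])
    exact div_le_div_of_nonneg_left hθ0.le (by norm_num) (by linarith)
  have hcc : c - 4 * c ^ 3 / 3 = c * (23 / 24) := by
    rw [pow_succ, hc2]
    ring
  have hfac : 1 / 40 ≤ (1 - θ) * (c - 4 * c ^ 3 / 3) - ‖w‖ / √(1 - ‖w‖ ^ 2) := by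
    rw [hcc]
    nlinarith
  calc θ / (20 * √(2 * π)) * ‖w‖ ≤ θ / 40 * ‖w‖ := mul_le_mul_of_nonneg_right hπ hr.le
    _ = θ * ‖w‖ * (1 / 40) := by ring
    _ ≤ θ * ‖w‖ * ((1 - θ) * (c - 4 * c ^ 3 / 3) - ‖w‖ / √(1 - ‖w‖ ^ 2)) :=
      mul_le_mul_of_nonneg_left hfac (by positivity)
    _ = _ := by ring

/-- Proposition: large gradient region of the expected objective. -/
theorem statement5 (n : ℕ) (θ μ : ℝ) (hθ : θ ∈ Set.Ioo (0 : ℝ) (1 / 2)) (hμ0 : 0 < μ)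
    (hμ : μ ≤ 9 / 50) (w : EuclideanSpace ℝ (Fin (n - 1)))
    (hw1 : μ / (4 * Real.sqrt 2) ≤ ‖w‖) (hw2 : ‖w‖ ≤ 1 / (20 * Real.sqrt 5)) :
    θ / (20 * Real.sqrt (2 * π)) ≤ ⟪w, gradient (Gexp n θ μ) w⟫ / ‖w‖ := by
  cases n with
  | zero =>
    have hw : w = 0 := Subsingleton.elim (α := EuclideanSpace ℝ (Fin 0)) w 0
    rw [hw, norm_zero] at hw1
    exact absurd hw1 (not_le.2 (by positivity))
  | succ m => exact large_gradient_Gexp_succ m θ μ hθ hμ0 w hw1 hw2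

end
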